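/- arXiv:1812.09498 — 2 statements merged into one kernel-verified Lean document; each statement's English description precedes it below -/
import Mathlib

section
/- Let x* ∈ C²([0,u_b]) satisfy x*''(u) = −𝒩(u, x*(u))·(x*'(u))³ for all u ∈ [0,u_b]. Then for every u ∈ [0,u_b] one has x*'(u) = x*'(0) / √(1 + 2·x*'(0)²·∫₀^u 𝒩(ξ, x*(ξ)) dξ). In particular, if x*'(0) = 0 then x*' vanishes identically, while if x*'(0) ≠ 0 then x*'(u) ≠ 0 for all u ∈ [0,u_b] and x*'(u) has the same sign as x*'(0). -/
open Set Filter

noncomputable section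

/-- Partial derivative of a two-argument function with respect to its first argument. -/
def pd1 (f : ℝ → ℝ → ℝ) (u x : ℝ) : ℝ := deriv (fun t => f t x) u

/-- Partial derivative of a two-argument function with respect to its second argument. -/
def pd2 (f : ℝ → ℝ → ℝ) (u x : ℝ) : ℝ := deriv (fun s => f u s) x

/-- The nonlinearity `𝒩(u,x) = N(u,x)·u`. -/
def Ncal (N : ℝ → ℝ → ℝ) (u x : ℝ) : ℝ := N u x * u

/-- `u` is twice continuously differentiable on `s`, with first derivative `u'`
and second derivative `u''` (derivatives within `s`). -/
def IsC2On (u u' u'' : ℝ → ℝ) (s : Set ℝ) : Prop :=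
  (∀ x ∈ s, HasDerivWithinAt u (u' x) s x) ∧
  (∀ x ∈ s, HasDerivWithinAt u' (u'' x) s x) ∧
  ContinuousOn u'' s

/-- The straight boundary value problem: `u ∈ C²([a,b])`, `u'' = 𝒩(u(x),x)` on `[a,b]`,
`u(a) = 0`, `u(b) = ub`. -/
def IsStraightBVP (N : ℝ → ℝ → ℝ) (a b ub : ℝ) (u u' u'' : ℝ → ℝ) : Prop :=
  IsC2On u u' u'' (Icc a b) ∧
  (∀ x ∈ Icc a b, u'' x = Ncal N (u x) x) ∧
  u a = 0 ∧ u b = ub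

/-- The primitive of a function continuous on `[a,b]` is differentiable within `[a,b]`. -/
theorem hasDerivWithinAt_integral_Icc {f : ℝ → ℝ} {a b : ℝ} (hab : a ≤ b)
    (hf : ContinuousOn f (Icc a b)) {x : ℝ} (hx : x ∈ Icc a b) :
    HasDerivWithinAt (fun y => ∫ t in a..y, f t) (f x) (Icc a b) x := by
  have hcont : Continuous (IccExtend hab ((Icc a b).domRestrict f)) :=
    hf.domRestrict.Icc_extend'
  have heq : ∀ y ∈ Icc a b, IccExtend hab ((Icc a b).domRestrict f) y = f y := fun y hy => by
    rw [IccExtend_of_mem hab _ hy, domRestrict_apply]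
  have hder := (hcont.integral_hasStrictDerivAt a x).hasDerivAt.hasDerivWithinAt (s := Icc a b)
  rw [heq x hx] at hder
  have hint : ∀ y ∈ Icc a b, ∫ t in a..y, f t =
      ∫ t in a..y, IccExtend hab ((Icc a b).domRestrict f) t := fun y hy => by
    refine intervalIntegral.integral_congr fun t ht => ?_
    rw [uIcc_of_le hy.1] at ht
    exact (heq t ⟨ht.1, ht.2.trans hy.2⟩).symm
  exact hder.congr hint (hint x hx)

/-- A function whose derivative within `[a,b]` vanishes is constant there. -/
theorem eq_left_of_hasDerivWithinAt_Icc_zero {f : ℝ → ℝ} {a b : ℝ}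
    (hf : ∀ x ∈ Icc a b, HasDerivWithinAt f 0 (Icc a b) x) {x : ℝ} (hx : x ∈ Icc a b) :
    f x = f a :=
  constant_of_derivWithin_zero (fun y hy => (hf y hy).differentiableWithinAt)
    (fun y hy => (hf y (Ico_subset_Icc_self hy)).derivWithin
      (uniqueDiffOn_Icc (hy.1.trans_lt hy.2) y (Ico_subset_Icc_self hy))) x hx

/-- A solution of the scalar linear equation `p' = q p` on `[a,b]` is
`p(a) exp (∫ q)`. -/
theorem eq_mul_exp_integral_of_hasDerivWithinAt {p q : ℝ → ℝ} {a b : ℝ}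
    (hq : ContinuousOn q (Icc a b))
    (hp : ∀ x ∈ Icc a b, HasDerivWithinAt p (q x * p x) (Icc a b) x)
    {x : ℝ} (hx : x ∈ Icc a b) :
    p x = p a * Real.exp (∫ t in a..x, q t) := by
  have hconst := eq_left_of_hasDerivWithinAt_Icc_zero
    (f := fun y => p y * Real.exp (-∫ t in a..y, q t)) (fun y hy => by
      refine ((hp y hy).mul (hasDerivWithinAt_integral_Icc (hx.1.trans hx.2) hq
        hy).neg.exp).congr_deriv ?_
      simp only [Pi.neg_apply]
      ring) hx
  simp only [intervalIntegral.integral_same, neg_zero, Real.exp_zero, mul_one] at hconst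
  rw [← hconst, mul_assoc, ← Real.exp_add, neg_add_cancel, Real.exp_zero, mul_one]

/-- A solution of the Bernoulli equation `p' = -n p³` on `[a,b]` is a positive multiple
`p(a) E` of its initial value, where `E⁻² = 1 + 2 p(a)² ∫ n`. -/
theorem exists_pos_factor_of_bernoulli {p n : ℝ → ℝ} {a b : ℝ}
    (hn : ContinuousOn n (Icc a b))
    (hp : ∀ x ∈ Icc a b, HasDerivWithinAt p (-n x * p x ^ 3) (Icc a b) x)
    {x : ℝ} (hx : x ∈ Icc a b) :
    ∃ E : ℝ, 0 < E ∧ p x = p a * E ∧ 1 + 2 * p a ^ 2 * ∫ t in a..x, n t = (E⁻¹) ^ 2 := by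
  have hab : a ≤ b := hx.1.trans hx.2
  have hpc : ContinuousOn p (Icc a b) := fun y hy => (hp y hy).continuousWithinAt
  have hq : ContinuousOn (fun y => -n y * p y ^ 2) (Icc a b) := hn.neg.mul (hpc.pow 2)
  have hexp : ∀ y ∈ Icc a b, p y = p a * Real.exp (∫ t in a..y, -n t * p t ^ 2) :=
    fun y hy => eq_mul_exp_integral_of_hasDerivWithinAt hq
      (fun z hz => by convert hp z hz using 1; ring) hy
  refine ⟨_, Real.exp_pos _, hexp x hx, ?_⟩
  have hconst := eq_left_of_hasDerivWithinAt_Icc_zero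
    (f := fun y => 1 + 2 * p a ^ 2 * (∫ t in a..y, n t) -
      Real.exp (-∫ t in a..y, -n t * p t ^ 2) ^ 2) (fun y hy => by
      refine ((((hasDerivWithinAt_integral_Icc hab hn hy).const_mul (2 * p a ^ 2)).const_add
        1).sub ((hasDerivWithinAt_integral_Icc hab hq hy).neg.exp.pow 2)).congr_deriv ?_
      simp only [Pi.neg_apply]
      rw [hexp y hy, Real.exp_neg]
      simp only [Nat.cast_ofNat, Nat.reduceSub, pow_one]
      field_simp
      ring) hx
  simp only [intervalIntegral.integral_same, neg_zero, Real.exp_zero] at hconst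
  rw [← Real.exp_neg]
  linarith

/-- representation of the derivative of a solution of the inverse equation,
with the sign consequences. -/
theorem inverse_equation_derivative_representation
    (ub : ℝ) (hub : 0 < ub)
    (N : ℝ → ℝ → ℝ) (hN : ContDiff ℝ 1 (Function.uncurry N))
    (xs xs' xs'' : ℝ → ℝ)
    (hx : IsC2On xs xs' xs'' (Icc 0 ub))
    (hode : ∀ u ∈ Icc (0:ℝ) ub, xs'' u = -(Ncal N u (xs u)) * (xs' u) ^ 3) :
    (∀ u ∈ Icc (0:ℝ) ub,
      xs' u = xs' 0 / Real.sqrt (1 + 2 * (xs' 0) ^ 2 * ∫ ξ in (0:ℝ)..u, Ncal N ξ (xs ξ))) ∧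
    (xs' 0 = 0 → ∀ u ∈ Icc (0:ℝ) ub, xs' u = 0) ∧
    (xs' 0 ≠ 0 → ∀ u ∈ Icc (0:ℝ) ub, xs' u ≠ 0 ∧ 0 < xs' u * xs' 0) := by
  obtain ⟨hx0, hx1, -⟩ := hx
  have hxc : ContinuousOn xs (Icc 0 ub) := fun y hy => (hx0 y hy).continuousWithinAt
  have hn : ContinuousOn (fun u => Ncal N u (xs u)) (Icc 0 ub) :=
    (hN.continuous.comp_continuousOn (continuousOn_id.prodMk hxc)).mul continuousOn_id
  have key := fun u (hu : u ∈ Icc (0:ℝ) ub) => exists_pos_factor_of_bernoulli hn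
    (fun y hy => by simpa only [hode y hy] using hx1 y hy) hu
  refine ⟨fun u hu => ?_, fun h0 u hu => ?_, fun h0 u hu => ?_⟩ <;>
    obtain ⟨E, hE, hxE, hint⟩ := key u hu
  · rw [hint, Real.sqrt_sq (inv_pos.2 hE).le, div_inv_eq_mul, hxE]
  · rw [hxE, h0, zero_mul]
  · rw [hxE]
    refine ⟨mul_ne_zero h0 hE.ne', ?_⟩
    rw [mul_right_comm]
    exact mul_pos (mul_self_pos.2 h0) hE
end
end

section
/- Assume hypothesis (H) and fix a straight mesh on [a,c]. Then for every ν > 0 and every x ∈ [a,c] one has ũ_ν(x) ≥ ν·(x − a). -/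
open Set Filter

noncomputable section

/-- Hypothesis (H): `N`, `∂N/∂x`, `∂N/∂u`, `∂²N/∂x∂u`, `∂²N/∂u²` are all
nonnegative for `u ≥ 0` and `x ∈ [a,b]`. -/
def HypH (N : ℝ → ℝ → ℝ) (a b : ℝ) : Prop :=
  ∀ u : ℝ, 0 ≤ u → ∀ x ∈ Icc a b,
    0 ≤ N u x ∧ 0 ≤ pd2 N u x ∧ 0 ≤ pd1 N u x ∧
    0 ≤ pd2 (pd1 N) u x ∧ 0 ≤ pd1 (pd1 N) u x

/-- A mesh: finitely many strictly increasing points `pt 0 < pt 1 < ⋯ < pt n`. -/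
structure Mesh where
  n : ℕ
  pt : ℕ → ℝ
  npos : 0 < n
  mono : ∀ i < n, pt i < pt (i + 1)

/-- The coefficient `α_i(p,q,x)` of the straight discretized equation,
where `xi` is the mesh point `x_i`. -/
def alphaC (N : ℝ → ℝ → ℝ) (xi p q x : ℝ) : ℝ :=
  (pd1 N q xi * p + pd2 N q xi) * (x - xi) + N q xi

/-- The coefficient `β_i(p,q,v)` of the inverse discretized equation,
where `ui` is the (shifted) mesh point `ū_i`. -/
def betaC (N : ℝ → ℝ → ℝ) (ui p q v : ℝ) : ℝ :=
  -(pd1 (Ncal N) ui q + pd2 (Ncal N) ui q * p) * (v - ui) - Ncal N ui q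

/-- Shifted mesh knots `ū_i = max(u_i, s)`. -/
def ubar (m : Mesh) (s : ℝ) (i : ℕ) : ℝ := max (m.pt i) s

/-- A straight scheme solution on `[a,c]` with respect to the mesh `m`:
`ũ ∈ C¹([a,c])` and on each mesh subinterval `[x_i, x_{i+1}]` the second
derivative of `ũ` equals `α_i(ũ'(x_i), ũ(x_i), x)·ũ(x)`. -/
def IsStraightSol (N : ℝ → ℝ → ℝ) (a c : ℝ) (m : Mesh) (u u' : ℝ → ℝ) : Prop :=
  (∀ x ∈ Icc a c, HasDerivWithinAt u (u' x) (Icc a c) x) ∧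
  ContinuousOn u' (Icc a c) ∧
  ∀ i < m.n, ∀ x ∈ Icc (m.pt i) (m.pt (i + 1)),
    HasDerivWithinAt u'
      (alphaC N (m.pt i) (u' (m.pt i)) (u (m.pt i)) x * u x)
      (Icc (m.pt i) (m.pt (i + 1))) x

/-- An inverse scheme solution on `[s, ub]` with respect to the mesh `m` (shifted by `s`):
`x̃ ∈ C¹([s,ub])` and on each subinterval `[ū_i, ū_{i+1}]` the second derivative of `x̃`
equals `β_i(x̃'(ū_i), x̃(ū_i), v)·(x̃'(v))³`. -/
def IsInvSol (N : ℝ → ℝ → ℝ) (ub : ℝ) (m : Mesh) (s : ℝ) (X X' : ℝ → ℝ) : Prop :=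
  (∀ v ∈ Icc s ub, HasDerivWithinAt X (X' v) (Icc s ub) v) ∧
  ContinuousOn X' (Icc s ub) ∧
  ∀ i < m.n, ∀ v ∈ Icc (ubar m s i) (ubar m s (i + 1)),
    HasDerivWithinAt X'
      (betaC N (ubar m s i) (X' (ubar m s i)) (X (ubar m s i)) v * (X' v) ^ 3)
      (Icc (ubar m s i) (ubar m s (i + 1))) v

/-- A scheme pair `(ũ, x̃)`. -/
def IsSchemePair (N : ℝ → ℝ → ℝ) (a b c ub : ℝ) (ms mi : Mesh)
    (u u' X X' : ℝ → ℝ) : Prop :=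
  IsStraightSol N a c ms u u' ∧ u a = 0 ∧ 0 < u c ∧ u c < ub ∧ u' c ≠ 0 ∧
  IsInvSol N ub mi (u c) X X' ∧ X ub = b ∧ X (u c) = c ∧ X' (u c) = 1 / u' c

/-- A scheme pair additionally satisfying the sign inequalities
`0 < ũ < u_b`, `ũ' > 0`, `ũ'' ≥ 0` on `(a,c]`, and `c < x̃`, `x̃' > 0`, `x̃'' ≤ 0`
on `(ũ(c), u_b]` (second derivatives taken on the mesh subintervals). -/
def GoodPair (N : ℝ → ℝ → ℝ) (a b c ub : ℝ) (ms mi : Mesh)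
    (u u' X X' : ℝ → ℝ) : Prop :=
  IsSchemePair N a b c ub ms mi u u' X X' ∧
  (∀ x ∈ Ioc a c, 0 < u x ∧ u x < ub ∧ 0 < u' x) ∧
  (∀ i < ms.n, ∀ x ∈ Icc (ms.pt i) (ms.pt (i + 1)), x ∈ Ioc a c →
    0 ≤ alphaC N (ms.pt i) (u' (ms.pt i)) (u (ms.pt i)) x * u x) ∧
  (∀ v ∈ Ioc (u c) ub, c < X v ∧ 0 < X' v) ∧
  (∀ i < mi.n, ∀ v ∈ Icc (ubar mi (u c) i) (ubar mi (u c) (i + 1)), v ∈ Ioc (u c) ub →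
    betaC N (ubar mi (u c) i) (X' (ubar mi (u c) i)) (X (ubar mi (u c) i)) v * (X' v) ^ 3 ≤ 0)

/-- All steps of the straight mesh `ms` and of the (shifted) inverse mesh `mi`
are of size at most `h`. -/
def StepLe (ms mi : Mesh) (s h : ℝ) : Prop :=
  (∀ i < ms.n, ms.pt (i + 1) - ms.pt i ≤ h) ∧
  (∀ i < mi.n, ubar mi s (i + 1) - ubar mi s i ≤ h)

/-- A function whose one-sided derivatives on `[l, r]` are nonnegative in the interior is
monotone there. -/
theorem monotoneOn_Icc_of_hasDerivWithinAt_nonneg {f f' : ℝ → ℝ} {l r : ℝ}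
    (hf : ∀ x ∈ Icc l r, HasDerivWithinAt f (f' x) (Icc l r) x)
    (hf' : ∀ x ∈ Ioo l r, 0 ≤ f' x) : MonotoneOn f (Icc l r) := by
  refine monotoneOn_of_hasDerivWithinAt_nonneg (f' := f') (convex_Icc l r)
    (fun x hx => (hf x hx).continuousWithinAt) (fun x hx => ?_) (fun x hx => ?_)
  · exact (hf x (interior_subset hx)).mono interior_subset
  · rw [interior_Icc] at hx
    exact hf' x hx

/-- If `u'' = k u` on `[l, r]` with `k ≥ 0`, `u l ≥ 0` and `u' l > 0`, then `u' l` is a lower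
bound for `u'` on `[l, r]`. -/
theorem deriv_left_le_of_deriv_eq_nonneg_mul {u u' k : ℝ → ℝ} {l r : ℝ}
    (hu : ∀ x ∈ Icc l r, HasDerivWithinAt u (u' x) (Icc l r) x)
    (hu' : ∀ x ∈ Icc l r, HasDerivWithinAt u' (k x * u x) (Icc l r) x)
    (hk : ∀ x ∈ Icc l r, 0 ≤ k x) (hul : 0 ≤ u l) (hul' : 0 < u' l) :
    ∀ x ∈ Icc l r, u' l ≤ u' x := by
  have of_pos : ∀ t ∈ Icc l r, (∀ x ∈ Ioo l t, 0 < u' x) → u' l ≤ u' t := by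
    intro t ht hpos
    have hsub : Icc l t ⊆ Icc l r := Icc_subset_Icc_right ht.2
    have hmono : MonotoneOn u (Icc l t) :=
      monotoneOn_Icc_of_hasDerivWithinAt_nonneg
        (fun x hx => (hu x (hsub hx)).mono hsub) (fun x hx => (hpos x hx).le)
    have hmono' : MonotoneOn u' (Icc l t) := by
      refine monotoneOn_Icc_of_hasDerivWithinAt_nonneg
        (fun x hx => (hu' x (hsub hx)).mono hsub) (fun x hx => ?_)
      have hx' := Ioo_subset_Icc_self hx
      exact mul_nonneg (hk x (hsub hx'))
        (hul.trans (hmono (left_mem_Icc.2 ht.1) hx' hx'.1))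
    exact hmono' (left_mem_Icc.2 ht.1) (right_mem_Icc.2 ht.1) ht.1
  have hpos : ∀ x ∈ Icc l r, 0 < u' x := by
    by_contra! hneg
    have hcont : ContinuousOn u' (Icc l r) := fun x hx => (hu' x hx).continuousWithinAt
    have hcomp : IsCompact (Icc l r ∩ {x | u' x ≤ 0}) :=
      isCompact_Icc.of_isClosed_subset
        (hcont.preimage_isClosed_of_isClosed isClosed_Icc isClosed_Iic) inter_subset_left
    obtain ⟨t, ⟨ht, htle⟩, htmin⟩ := hcomp.exists_isLeast hneg
    refine absurd (of_pos t ht fun x hx => ?_) (not_le.2 (lt_of_le_of_lt htle hul'))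
    by_contra! hx0
    exact absurd (htmin ⟨⟨hx.1.le, hx.2.le.trans ht.2⟩, hx0⟩) (not_le.2 hx.2)
  exact fun x hx => of_pos x hx fun y hy => hpos y ⟨hy.1.le, hy.2.le.trans hx.2⟩

/-- The points of a mesh are increasing up to its last index. -/
theorem Mesh.pt_le_pt (m : Mesh) {i j : ℕ} (hij : i ≤ j) (hj : j ≤ m.n) :
    m.pt i ≤ m.pt j := by
  induction j, hij using Nat.le_induction with
  | base => exact le_rfl
  | succ j _ ih => exact (ih (by lia)).trans (m.mono j (by lia)).le

/-- The coefficient `alphaC` is nonnegative to the right of the mesh point. -/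
theorem alphaC_nonneg {N : ℝ → ℝ → ℝ} {a b xi p q x : ℝ} (hH : HypH N a b)
    (hxi : xi ∈ Icc a b) (hp : 0 ≤ p) (hq : 0 ≤ q) (hx : xi ≤ x) :
    0 ≤ alphaC N xi p q x := by
  obtain ⟨h0, h2, h1, -, -⟩ := hH q hq xi hxi
  have := sub_nonneg.2 hx
  unfold alphaC
  positivity

/-- under hypothesis (H), the straight scheme solution with initial slope
`ν > 0` satisfies `ũ_ν(x) ≥ ν·(x − a)` on `[a,c]`. -/
theorem straight_scheme_lower_bound
    (a b c ub : ℝ) (hab : a < b) (hub : 0 < ub) (hc : c ∈ Ioo a b)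
    (N : ℝ → ℝ → ℝ) (hN : ContDiff ℝ 2 (Function.uncurry N))
    (hH : HypH N a b)
    (ms : Mesh) (hms0 : ms.pt 0 = a) (hmsn : ms.pt ms.n = c)
    (ν : ℝ) (hν : 0 < ν)
    (u u' : ℝ → ℝ)
    (hsol : IsStraightSol N a c ms u u') (ha : u a = 0) (hd : u' a = ν) :
    ∀ x ∈ Icc a c, ν * (x - a) ≤ u x := by
  obtain ⟨hu, -, hu'⟩ := hsol
  have slope : ∀ i ≤ ms.n, ∀ x ∈ Icc a (ms.pt i), ν ≤ u' x := by
    intro i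
    induction i with
    | zero =>
      intro _ x hx
      rw [hms0] at hx
      rw [le_antisymm hx.2 hx.1, hd]
    | succ i ih =>
      intro hi x hx
      have hin : i < ms.n := by lia
      have hai : a ≤ ms.pt i := hms0 ▸ ms.pt_le_pt (Nat.zero_le i) hin.le
      have hic : ms.pt (i + 1) ≤ c := hmsn ▸ ms.pt_le_pt hi le_rfl
      have hstep := (ms.mono i hin).le
      rcases le_total x (ms.pt i) with hxi | hxi
      · exact ih hin.le x ⟨hx.1, hxi⟩
      have hsub : Icc a (ms.pt i) ⊆ Icc a c := Icc_subset_Icc_right (hstep.trans hic)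
      have hmono : MonotoneOn u (Icc a (ms.pt i)) :=
        monotoneOn_Icc_of_hasDerivWithinAt_nonneg
          (fun y hy => (hu y (hsub hy)).mono hsub)
          (fun y hy => hν.le.trans (ih hin.le y (Ioo_subset_Icc_self hy)))
      have hui : 0 ≤ u (ms.pt i) :=
        ha ▸ hmono (left_mem_Icc.2 hai) (right_mem_Icc.2 hai) hai
      have hui' : ν ≤ u' (ms.pt i) := ih hin.le _ (right_mem_Icc.2 hai)
      have hsub' : Icc (ms.pt i) (ms.pt (i + 1)) ⊆ Icc a c := Icc_subset_Icc hai hic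
      exact hui'.trans <| deriv_left_le_of_deriv_eq_nonneg_mul
        (fun y hy => (hu y (hsub' hy)).mono hsub') (hu' i hin)
        (fun y hy => alphaC_nonneg hH ⟨hai, (hstep.trans hic).trans hc.2.le⟩
          (hν.le.trans hui') hui hy.1)
        hui (hν.trans_le hui') x ⟨hxi, hx.2⟩
  have hmono : MonotoneOn (fun x => u x - ν * x) (Icc a c) := by
    refine monotoneOn_Icc_of_hasDerivWithinAt_nonneg (f' := fun x => u' x - ν)
      (fun x hx => ?_) (fun x hx => ?_)
    · have h := (hu x hx).sub ((hasDerivWithinAt_id x _).const_mul ν)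
      rw [mul_one] at h
      exact h
    · exact sub_nonneg.2 (slope ms.n le_rfl x (hmsn.symm ▸ Ioo_subset_Icc_self hx))
  intro x hx
  have := hmono (left_mem_Icc.2 hc.1.le) hx hx.1
  simp only [ha] at this
  linarith
end
end
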